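/- Let G₁ be an r₁-regular graph on n₁ vertices and m₁ edges, and G₂ an r₂-regular graph on n₂ vertices, and let α ∈ [0,1]. (1) If r₁ = 1 (so G₁ = P₂, n₁ = 2, m₁ = 1), then the A_α-spectrum of the subdivision-vertex join G₁ ∨̇ G₂ consists precisely of: α(1+n₂); the values 2α + λ_i(A_α(G₂)) for i = 2,…,n₂; and the three roots of F(x) = (x−2α−r₂)(x² − α(3+n₂)x − 2(1−2α−α²n₂)) − 2n₂(1−α)²(x−2α). (2) If r₁ ≥ 2, then the A_α-spectrum of G₁ ∨̇ G₂ consists precisely of: 2α repeated m₁−n₁ times; αn₁ + λ_i(A_α(G₂)) for i = 2,…,n₂; the two roots of G_i(x) = x² − α(2+r₁+n₂)x + α(αr₁+r₁+2αn₂) − (1−α)(r₁(1−α) + λ_i(A_α(G₁))) for each i = 2,…,n₁; and the three roots of F(x) = (x−αn₁−r₂)(x² − α(2+r₁+n₂)x − 2(r₁−2αr₁−α²n₂)) − n₁n₂(1−α)²(x−2α). -/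

import Mathlib

open Matrix Polynomial
open scoped Classical

noncomputable section

/-- `A_α(G) = α·D(G) + (1-α)·A(G)`, where `D(G)` is the diagonal degree matrix and
`A(G)` the adjacency matrix. -/
def Aalpha {V : Type*} [Fintype V] (G : SimpleGraph V) (α : ℝ) : Matrix V V ℝ :=
  α • Matrix.diagonal (fun v => (G.degree v : ℝ)) + (1 - α) • G.adjMatrix ℝ

/-- The subdivision-vertex join `G₁ ∨̇ G₂`: take the subdivision graph `S(G₁)` (a new
vertex inserted in each edge of `G₁`) together with `G₂`, and join every original vertex
of `G₁` with every vertex of `G₂`. -/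
def subdivisionVertexJoin {V₁ V₂ : Type*} (G₁ : SimpleGraph V₁) (G₂ : SimpleGraph V₂) :
    SimpleGraph (V₁ ⊕ (↥G₁.edgeSet ⊕ V₂)) :=
  SimpleGraph.fromRel fun a b =>
    match a, b with
    | Sum.inl v, Sum.inr (Sum.inl e) => v ∈ (e : Sym2 V₁)
    | Sum.inl _, Sum.inr (Sum.inr _) => True
    | Sum.inr (Sum.inr u), Sum.inr (Sum.inr w) => G₂.Adj u w
    | _, _ => False

/-!
Order the vertices of `G₁ ∨̇ G₂` as `V(G₁)`, `E(G₁)`, `V(G₂)`. The last two classes are not joined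
to each other, so their block of `X - A_α` is `diag(X - 2α, Q)`, where `Q` has constant row sums `q`
because `G₂` is regular. Constant row sums allow a Schur complement that multiplies by `X - 2α` and
`q` instead of dividing by them. Since `R Rᵀ = r₁ I + A(G₁)` for the vertex-edge incidence matrix
`R`, the edges contribute a polynomial in `X` and `A_α(G₁)`, whose determinant splits over the
eigenvalues of `A_α(G₁)`, while `V(G₂)` contributes a multiple of the all-ones matrix `J`. The
all-ones vector is an eigenvector of both, so subtracting a multiple of `J` only alters the factor
of the eigenvalue `r₁`, and the resulting identity may be divided by its monic common factors.
-/

/-- The `m × n` matrix all of whose entries are `c`, written `cJ` on paper. -/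
def constMatrix (m n : Type*) {R : Type*} (c : R) : Matrix m n R :=
  of fun _ _ => c

@[simp]
theorem constMatrix_apply {R m n : Type*} (c : R) (i : m) (j : n) : constMatrix m n c i j = c :=
  rfl

section Determinant

variable {R n : Type*} [CommRing R] [Fintype n]

theorem mul_constMatrix_of_mulVec_one {m : Type*} {M : Matrix n n R} {s : R} (hM : M *ᵥ 1 = s • 1)
    (c : R) : M * constMatrix n m c = constMatrix n m (s * c) := by
  ext i j
  have hrow : ∑ k, M i k = s := by simpa [mulVec, dotProduct] using congrFun hM i
  simp [mul_apply, ← Finset.sum_mul, hrow]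

variable [DecidableEq n]

theorem pow_mul_det_fromBlocks_of_mul_eq_smul {m : Type*} [Fintype m] [DecidableEq m]
    (A : Matrix m m R) (B : Matrix m n R) {C K : Matrix n m R} {D : Matrix n n R} {d : R}
    (h : D * K = d • C) :
    d ^ Fintype.card m * (fromBlocks A B C D).det = (d • A - B * K).det * D.det := by
  have hmul : fromBlocks A B C D * fromBlocks (d • 1) 0 (-K) 1 =
      fromBlocks (d • A - B * K) B 0 D := by
    simp [fromBlocks_multiply, h, sub_eq_add_neg]
  have hdet := congrArg det hmul
  rw [det_mul, det_fromBlocks_zero₁₂, det_fromBlocks_zero₂₁, det_one, mul_one, det_smul, det_one,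
    mul_one] at hdet
  rw [mul_comm, hdet]

theorem mul_det_sub_constMatrix_of_mulVec_one {M : Matrix n n R} {s : R} (hM : M *ᵥ 1 = s • 1)
    (t : R) : s * (M - constMatrix n n t).det = M.det * (s - Fintype.card n * t) := by
  have hcol : M * constMatrix n Unit (1 : R) = s • constMatrix n Unit 1 := by
    rw [mul_constMatrix_of_mulVec_one hM]
    ext
    simp
  have houter : constMatrix n Unit (1 : R) * constMatrix Unit n t = constMatrix n n t := by
    ext
    simp [mul_apply]
  have hschur := pow_mul_det_fromBlocks_of_mul_eq_smul 1 (constMatrix Unit n t) hcol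
  rw [det_fromBlocks_one₁₁, houter, Fintype.card_unit, pow_one] at hschur
  rw [hschur, mul_comm, det_unique (n := Unit)]
  simp [mul_apply]

theorem mul_det_fromBlocks_constMatrix_of_mulVec_one [IsDomain R] {V E W : Type*}
    [Fintype V] [DecidableEq V] [Fintype E] [DecidableEq E] [Fintype W] [DecidableEq W]
    {P : Matrix V V R} {B : Matrix V E R} {C : Matrix E V R} {Q : Matrix W W R} {d q g : R}
    (hq : q ≠ 0) (hQ : Q *ᵥ 1 = q • 1) (hS : (d • P - B * C) *ᵥ 1 = g • 1) (b c : R) :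
    d ^ Fintype.card V * (q * g) *
        (fromBlocks P (fromCols B (constMatrix V W b)) (fromRows C (constMatrix W V c))
          (fromBlocks (d • 1) 0 0 Q)).det =
      d ^ Fintype.card E * Q.det * (d • P - B * C).det *
        (q * g - Fintype.card V * Fintype.card W * (b * c) * d) := by
  have hcol : fromBlocks (d • (1 : Matrix E E R)) 0 0 Q *
      fromRows (q • C) (constMatrix W V (d * c)) = (d * q) • fromRows C (constMatrix W V c) := by
    rw [fromBlocks_mul_fromRows, mul_constMatrix_of_mulVec_one hQ]
    ext (_ | _) _ <;> simp [mul_assoc, mul_left_comm]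
  have hcompl : (d * q) • P - fromCols B (constMatrix V W b) *
      fromRows (q • C) (constMatrix W V (d * c)) =
      q • (d • P - B * C) - constMatrix V V (Fintype.card W * (b * c) * d) := by
    rw [fromCols_mul_fromRows, Matrix.mul_smul]
    ext
    simp only [Matrix.sub_apply, Matrix.add_apply, Matrix.smul_apply, smul_eq_mul,
      mul_apply (M := constMatrix V W b),
      constMatrix_apply, Finset.sum_const, Finset.card_univ, nsmul_eq_mul]
    ring
  have hrank := mul_det_sub_constMatrix_of_mulVec_one (M := q • (d • P - B * C)) (s := q * g)
    (by rw [smul_mulVec, hS, smul_smul]) (Fintype.card W * (b * c) * d)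
  have hdet := pow_mul_det_fromBlocks_of_mul_eq_smul P (fromCols B (constMatrix V W b)) hcol
  rw [hcompl, det_fromBlocks_zero₂₁, det_smul, det_one, mul_one] at hdet
  rw [det_smul] at hrank
  apply mul_left_cancel₀ (pow_ne_zero (Fintype.card V) hq)
  linear_combination (q * g) * hdet + d ^ Fintype.card E * Q.det * hrank

end Determinant

section Charpoly

variable {V : Type*} [Fintype V] [DecidableEq V]

theorem sum_eq_trace_of_charpoly_eq_prod {R : Type*} [CommRing R] {M : Matrix V V R} {μ : V → R}
    (hM : M.charpoly = ∏ i, (X - C (μ i))) : ∑ i, μ i = M.trace := by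
  nontriviality R
  rw [trace_eq_neg_charpoly_nextCoeff, hM, prod_X_sub_C_nextCoeff, neg_neg]

theorem smul_one_sub_map_C_mulVec_one {R : Type*} [CommRing R]
    {M : Matrix V V R} {s : R} (hM : M *ᵥ 1 = s • 1) (p : R[X]) (b : R) :
    (p • 1 - (b • M).map C) *ᵥ 1 = (p - C (b * s)) • 1 := by
  have hrow : (b • M).map C *ᵥ 1 = C (b * s) • 1 := by
    ext1 i
    have hi : ∑ j, M i j = s := by simpa [mulVec, dotProduct] using congrFun hM i
    simp [mulVec, dotProduct, ← Finset.mul_sum, ← map_sum, hi]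
  rw [sub_mulVec, smul_mulVec, one_mulVec, hrow, sub_smul]

variable {K : Type*} [Field K] {M : Matrix V V K} {μ : V → K}

theorem spectrum_eq_range_of_charpoly_eq_prod (hM : M.charpoly = ∏ i, (X - C (μ i))) :
    spectrum K M = Set.range μ := by
  ext x
  simp [mem_spectrum_iff_isRoot_charpoly, hM, IsRoot, eval_prod, Finset.prod_eq_zero_iff,
    sub_eq_zero, eq_comm (a := x)]

theorem det_smul_one_sub_map_C_of_charpoly_eq_prod (hM : M.charpoly = ∏ i, (X - C (μ i)))
    (p : K[X]) (b : K) : (p • 1 - (b • M).map C).det = ∏ i, (p - C (b * μ i)) := by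
  rcases eq_or_ne b 0 with rfl | hb
  · simp
  obtain ⟨p, rfl⟩ : ∃ p', p = C b * p' := ⟨C b⁻¹ * p, by simp [← mul_assoc, ← C_mul, hb]⟩
  have hfac : (C b * p) • 1 - (b • M).map C = C b • (scalar V p - M.map C) := by
    ext1 i j
    simp [Matrix.one_apply, diagonal_apply, mul_sub]
  rw [hfac, det_smul, ← eval_charpoly, charpoly_map, hM, Fintype.card, ← Finset.prod_const]
  simp [Polynomial.map_prod, eval_prod, -Finset.prod_const, ← Finset.prod_mul_distrib, mul_sub]

end Charpoly

section Spectrum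

variable {V : Type*} [Fintype V] [DecidableEq V]

theorem mem_spectrum_of_mulVec_one [Nonempty V] {K : Type*} [Field K] {M : Matrix V V K} {s : K}
    (hM : M *ᵥ 1 = s • 1) : s ∈ spectrum K M := by
  rw [← spectrum_toLin', ← Module.End.hasEigenvalue_iff_mem_spectrum]
  exact Module.End.hasEigenvalue_of_hasEigenvector
    ⟨Module.End.mem_eigenspace_iff.2 (by simpa using hM), one_ne_zero⟩

theorem le_of_mem_spectrum_of_mulVec_one {M : Matrix V V ℝ} {s x : ℝ} (hM : M *ᵥ 1 = s • 1)
    (hoff : ∀ i j, i ≠ j → 0 ≤ M i j) (hx : x ∈ spectrum ℝ M) : x ≤ s := by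
  rw [← spectrum_toLin', ← Module.End.hasEigenvalue_iff_mem_spectrum] at hx
  obtain ⟨k, hk⟩ := eigenvalue_mem_ball hx
  have hrow : M k k + ∑ j ∈ Finset.univ.erase k, M k j = s := by
    rw [Finset.add_sum_erase _ _ (Finset.mem_univ k)]
    simpa [mulVec, dotProduct] using congrFun hM k
  have hradius : ∑ j ∈ Finset.univ.erase k, ‖M k j‖ = ∑ j ∈ Finset.univ.erase k, M k j :=
    Finset.sum_congr rfl fun j hj =>
      Real.norm_of_nonneg (hoff k j (Finset.ne_of_mem_erase hj).symm)
  rw [Metric.mem_closedBall, Real.dist_eq, hradius] at hk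
  linarith [le_abs_self (x - M k k)]

theorem isGreatest_spectrum_of_mulVec_one [Nonempty V] {M : Matrix V V ℝ} {s : ℝ}
    (hM : M *ᵥ 1 = s • 1) (hoff : ∀ i j, i ≠ j → 0 ≤ M i j) : IsGreatest (spectrum ℝ M) s :=
  ⟨mem_spectrum_of_mulVec_one hM, fun _ => le_of_mem_spectrum_of_mulVec_one hM hoff⟩

end Spectrum

section Aalpha

variable {V : Type*} [Fintype V] {G : SimpleGraph V} {r : ℕ}

theorem Aalpha_eq_smul_one_add_of_isRegularOfDegree [DecidableEq V] (hreg : G.IsRegularOfDegree r)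
    (α : ℝ) : Aalpha G α = (α * r) • 1 + (1 - α) • G.adjMatrix ℝ := by
  ext i j
  simp [Aalpha, hreg.degree_eq, diagonal_apply, Matrix.one_apply]

theorem Aalpha_mulVec_one_of_isRegularOfDegree (hreg : G.IsRegularOfDegree r) (α : ℝ) :
    Aalpha G α *ᵥ 1 = (r : ℝ) • 1 := by
  ext i
  simp only [Aalpha_eq_smul_one_add_of_isRegularOfDegree hreg, add_mulVec, smul_mulVec, one_mulVec,
    Pi.add_apply, Pi.smul_apply, Pi.one_apply, smul_eq_mul, mul_one,
    SimpleGraph.adjMatrix_mulVec_apply, Finset.sum_const, SimpleGraph.card_neighborFinset_eq_degree,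
    hreg.degree_eq, nsmul_eq_mul]
  ring

theorem trace_Aalpha_of_isRegularOfDegree (hreg : G.IsRegularOfDegree r) (α : ℝ) :
    (Aalpha G α).trace = Fintype.card V * (α * r) := by
  simp [Aalpha_eq_smul_one_add_of_isRegularOfDegree hreg, mul_comm]

theorem Aalpha_apply_nonneg_of_ne {α : ℝ} (hα : α ≤ 1) {i j : V} (hij : i ≠ j) :
    0 ≤ Aalpha G α i j := by
  have := sub_nonneg.2 hα
  simp only [Aalpha, Matrix.add_apply, Matrix.smul_apply, smul_eq_mul, diagonal_apply_ne _ hij,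
    SimpleGraph.adjMatrix_apply, mul_zero, zero_add]
  positivity

theorem Aalpha_eigenvalue_zero_eq_of_antitone {n : ℕ} [NeZero n] {G : SimpleGraph (Fin n)}
    (hreg : G.IsRegularOfDegree r) {α : ℝ} (hα : α ≤ 1) {μ : Fin n → ℝ} (hμ : Antitone μ)
    (hch : (Aalpha G α).charpoly = ∏ i, (X - C (μ i))) : μ 0 = r := by
  have hgreatest := isGreatest_spectrum_of_mulVec_one
    (Aalpha_mulVec_one_of_isRegularOfDegree hreg α) fun _ _ => Aalpha_apply_nonneg_of_ne hα
  rw [spectrum_eq_range_of_charpoly_eq_prod hch] at hgreatest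
  refine IsGreatest.unique ⟨Set.mem_range_self 0, ?_⟩ hgreatest
  exact Set.forall_mem_range.2 fun i => hμ (Fin.zero_le i)

end Aalpha

section Incidence

variable {V : Type*} (G : SimpleGraph V) [DecidableEq V]

/-- The vertex-edge incidence matrix with columns indexed by the edges of `G` only; Mathlib's
`SimpleGraph.incMatrix` has a column for every unordered pair of vertices. -/
def edgeIncMatrix : Matrix V G.edgeSet ℝ :=
  (G.incMatrix ℝ).submatrix id Subtype.val

variable [Fintype V] [Fintype G.edgeSet]

theorem sum_edgeSet_incMatrix_mul (v : V) (f : Sym2 V → ℝ) :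
    ∑ e : G.edgeSet, G.incMatrix ℝ v e * f e = ∑ e, G.incMatrix ℝ v e * f e := by
  refine Fintype.sum_of_injective Subtype.val Subtype.val_injective _ _ (fun e he => ?_)
    fun _ => rfl
  have hnot : e ∉ G.incidenceSet v := fun h => he ⟨⟨e, h.1⟩, rfl⟩
  rw [SimpleGraph.incMatrix_of_notMem_incidenceSet _ hnot, zero_mul]

theorem sum_edgeIncMatrix_apply (v : V) : ∑ e, edgeIncMatrix G v e = G.degree v := by
  simpa [edgeIncMatrix, SimpleGraph.sum_incMatrix_apply] using sum_edgeSet_incMatrix_mul G v 1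

theorem edgeIncMatrix_mul_transpose :
    edgeIncMatrix G * (edgeIncMatrix G)ᵀ =
      diagonal (fun v => (G.degree v : ℝ)) + G.adjMatrix ℝ := by
  ext v w
  have hinc := congrFun₂ (SimpleGraph.incMatrix_mul_transpose (R := ℝ) (G := G)) v w
  rw [mul_apply] at hinc ⊢
  refine (sum_edgeSet_incMatrix_mul G v fun e => G.incMatrix ℝ w e).trans (hinc.trans ?_)
  rcases eq_or_ne v w with rfl | hvw
  · simp
  · simp [hvw]

theorem smul_edgeIncMatrix_mul_transpose_of_isRegularOfDegree {G : SimpleGraph V}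
    [Fintype G.edgeSet] {r : ℕ} (hreg : G.IsRegularOfDegree r) (α : ℝ) :
    ((1 - α) • edgeIncMatrix G) * ((1 - α) • edgeIncMatrix G)ᵀ =
      ((1 - α) * ((1 - 2 * α) * r)) • 1 + (1 - α) • Aalpha G α := by
  rw [transpose_smul, Matrix.smul_mul, Matrix.mul_smul, edgeIncMatrix_mul_transpose,
    Aalpha_eq_smul_one_add_of_isRegularOfDegree hreg]
  ext v w
  simp only [hreg.degree_eq, Matrix.smul_apply, Matrix.add_apply, diagonal_apply, Matrix.one_apply,
    smul_eq_mul]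
  split_ifs <;> ring

end Incidence

section Join

variable {V₁ V₂ : Type*} (G₁ : SimpleGraph V₁) (G₂ : SimpleGraph V₂)

theorem adjMatrix_subdivisionVertexJoin [DecidableEq V₁] :
    (subdivisionVertexJoin G₁ G₂).adjMatrix ℝ =
      fromBlocks 0 (fromCols (edgeIncMatrix G₁) (constMatrix V₁ V₂ 1))
        (fromRows (edgeIncMatrix G₁)ᵀ (constMatrix V₂ V₁ 1))
        (fromBlocks 0 0 0 (G₂.adjMatrix ℝ)) := by
  have hG₂ (u w : V₂) : ¬u = w ∧ (G₂.Adj u w ∨ G₂.Adj w u) ↔ G₂.Adj u w := by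
    simpa [G₂.adj_comm w u] using G₂.ne_of_adj
  ext (v | ⟨e, he⟩ | u) (w | ⟨f, hf⟩ | u') <;> rw [SimpleGraph.adjMatrix_apply] <;>
    simp only [subdivisionVertexJoin, SimpleGraph.fromRel_adj] <;>
    simp_all [edgeIncMatrix, SimpleGraph.incMatrix_apply', SimpleGraph.incidenceSet]

variable [Fintype V₁] [Fintype V₂] [Fintype G₁.edgeSet]

theorem degree_subdivisionVertexJoin (a : V₁ ⊕ (↥G₁.edgeSet ⊕ V₂)) :
    ((subdivisionVertexJoin G₁ G₂).degree a : ℝ) =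
      Sum.elim (fun v => G₁.degree v + (Fintype.card V₂ : ℝ))
        (Sum.elim (fun _ => 2) fun u => Fintype.card V₁ + (G₂.degree u : ℝ)) a := by
  have hsum := SimpleGraph.adjMatrix_mulVec_const_apply (G := subdivisionVertexJoin G₁ G₂)
    (a := (1 : ℝ)) (v := a)
  rw [mul_one, adjMatrix_subdivisionVertexJoin] at hsum
  rw [← hsum]
  rcases a with v | e | u
  · simp [mulVec, dotProduct, sum_edgeIncMatrix_apply]
  · simp [mulVec, dotProduct, edgeIncMatrix, SimpleGraph.sum_incMatrix_apply_of_mem_edgeSet]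
  · simp [mulVec, dotProduct, ← SimpleGraph.card_neighborFinset_eq_degree,
      SimpleGraph.neighborFinset_eq_filter]

variable {G₁}

theorem Aalpha_subdivisionVertexJoin_of_isRegularOfDegree [DecidableEq V₁]
    [DecidableEq V₂] {r₁ : ℕ} (hreg₁ : G₁.IsRegularOfDegree r₁) (α : ℝ) :
    Aalpha (subdivisionVertexJoin G₁ G₂) α =
      fromBlocks ((α * (r₁ + Fintype.card V₂)) • 1)
        (fromCols ((1 - α) • edgeIncMatrix G₁) (constMatrix V₁ V₂ (1 - α)))
        (fromRows ((1 - α) • edgeIncMatrix G₁)ᵀ (constMatrix V₂ V₁ (1 - α)))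
        (fromBlocks ((2 * α) • 1) 0 0 ((α * Fintype.card V₁) • 1 + Aalpha G₂ α)) := by
  rw [Aalpha, adjMatrix_subdivisionVertexJoin]
  ext (v | e | u) (w | f | u') <;>
    simp [degree_subdivisionVertexJoin, diagonal_apply, Matrix.one_apply, hreg₁.degree_eq,
      Aalpha] <;>
    split_ifs <;> ring

theorem charmatrix_Aalpha_subdivisionVertexJoin_of_isRegularOfDegree [DecidableEq V₁]
    [DecidableEq V₂] {r₁ : ℕ} (hreg₁ : G₁.IsRegularOfDegree r₁) (α : ℝ) :
    charmatrix (Aalpha (subdivisionVertexJoin G₁ G₂) α) =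
      fromBlocks ((X - C (α * (r₁ + Fintype.card V₂))) • 1)
        (fromCols (-((1 - α) • edgeIncMatrix G₁).map C) (constMatrix V₁ V₂ (-C (1 - α))))
        (fromRows (-((1 - α) • edgeIncMatrix G₁)ᵀ.map C) (constMatrix V₂ V₁ (-C (1 - α))))
        (fromBlocks ((X - C (2 * α)) • 1) 0 0
          ((X - C (α * Fintype.card V₁)) • 1 - (Aalpha G₂ α).map C)) := by
  rw [Aalpha_subdivisionVertexJoin_of_isRegularOfDegree G₂ hreg₁]
  ext1 (v | e | u) (w | f | u') <;>
    simp [charmatrix_apply, diagonal_apply, Matrix.one_apply] <;> split_ifs <;>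
    simp [sub_add_eq_sub_sub]

end Join

section Regular

variable {V : Type*} [Fintype V] {G : SimpleGraph V} {r : ℕ}

theorem two_mul_card_edgeSet_of_isRegularOfDegree [Fintype G.edgeSet]
    (hreg : G.IsRegularOfDegree r) : 2 * Fintype.card G.edgeSet = Fintype.card V * r := by
  have hsum := G.sum_degrees_eq_twice_card_edges
  simp only [hreg.degree_eq, Finset.sum_const, Finset.card_univ, smul_eq_mul] at hsum
  rw [hsum, ← SimpleGraph.edgeFinset_card]
  congr!

theorem card_eq_two_of_isRegularOfDegree_one (hconn : G.Connected)
    (hreg : G.IsRegularOfDegree 1) : Fintype.card V = 2 := by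
  have hedges := two_mul_card_edgeSet_of_isRegularOfDegree hreg
  have htree := hconn.card_vert_le_card_edgeSet_add_one
  have := hconn.nonempty
  have hpos : 0 < Fintype.card V := Fintype.card_pos
  simp only [Nat.card_eq_fintype_card] at htree
  omega

end Regular

section JoinSpectrum

/-- The factor `G_i` of the paper: the contribution of an eigenvalue `μ` of `A_α(G₁)` to the
characteristic polynomial of `A_α(G₁ ∨̇ G₂)`, for `G₁` regular of degree `r₁` and `G₂` on `n₂`
vertices. -/
def joinQuadratic (α : ℝ) (r₁ n₂ : ℕ) (μ : ℝ) : ℝ[X] :=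
  X ^ 2 - C (α * (2 + r₁ + n₂)) * X
    + C (α * (α * r₁ + r₁ + 2 * α * n₂) - (1 - α) * (r₁ * (1 - α) + μ))

/-- The factor `F` of the paper: the contribution of the two all-ones vectors to the characteristic
polynomial of `A_α(G₁ ∨̇ G₂)`, for `Gᵢ` regular of degree `rᵢ` on `nᵢ` vertices. -/
def joinCubic (α : ℝ) (n₁ r₁ n₂ r₂ : ℕ) : ℝ[X] :=
  (X - C (α * n₁ + r₂)) * joinQuadratic α r₁ n₂ r₁ - C (n₁ * n₂ * (1 - α) ^ 2) * (X - C (2 * α))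

theorem joinQuadratic_zero_sub_C (α : ℝ) (r₁ n₂ : ℕ) (μ : ℝ) :
    joinQuadratic α r₁ n₂ 0 - C ((1 - α) * μ) = joinQuadratic α r₁ n₂ μ := by
  simp only [joinQuadratic, map_mul, map_add, map_natCast, add_zero, map_sub, map_one]
  ring

theorem joinQuadratic_zero (α : ℝ) (r₁ n₂ : ℕ) :
    joinQuadratic α r₁ n₂ 0 =
      (X - C (2 * α)) * (X - C (α * (r₁ + n₂))) - C ((1 - α) * ((1 - 2 * α) * r₁)) := by
  simp only [joinQuadratic, map_mul, map_add, C_ofNat, map_natCast, add_zero, map_sub, map_one]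
  ring

theorem joinQuadratic_ne_zero (α : ℝ) (r₁ n₂ : ℕ) (μ : ℝ) : joinQuadratic α r₁ n₂ μ ≠ 0 := by
  refine Monic.ne_zero ?_
  rw [joinQuadratic]
  monicity!

theorem joinQuadratic_natCast (α : ℝ) (r₁ n₂ : ℕ) :
    joinQuadratic α r₁ n₂ r₁ =
      X ^ 2 - C (α * (2 + r₁ + n₂)) * X - C (2 * (r₁ - 2 * α * r₁ - α ^ 2 * n₂)) := by
  simp only [joinQuadratic, map_mul, map_add, C_ofNat, map_natCast, map_sub, map_one, map_pow]
  ring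

theorem joinQuadratic_one_two_mul_sub_one (α : ℝ) (n₂ : ℕ) :
    joinQuadratic α 1 n₂ (2 * α - 1) = (X - C (2 * α)) * (X - C (α * (1 + n₂))) := by
  simp only [joinQuadratic, Nat.cast_one, map_mul, map_add, C_ofNat, map_one, map_natCast, map_sub]
  ring

theorem joinCubic_two_one (α : ℝ) (n₂ r₂ : ℕ) :
    joinCubic α 2 1 n₂ r₂ =
      (X - C (2 * α + r₂)) *
          (X ^ 2 - C (α * (3 + n₂)) * X - C (2 * (1 - 2 * α - α ^ 2 * n₂)))
        - C (2 * n₂ * (1 - α) ^ 2) * (X - C (2 * α)) := by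
  rw [joinCubic, joinQuadratic_natCast]
  push_cast
  ring_nf

variable {V₁ V₂ : Type*} [Fintype V₁] [DecidableEq V₁] [Fintype V₂] [DecidableEq V₂]
  {G₁ : SimpleGraph V₁} {G₂ : SimpleGraph V₂} {r₁ r₂ : ℕ} {α : ℝ}

theorem Aalpha_eigenvalue_eq_of_isRegularOfDegree_one (hcard : Fintype.card V₁ = 2)
    (hreg : G₁.IsRegularOfDegree 1) {μ : V₁ → ℝ}
    (hch : (Aalpha G₁ α).charpoly = ∏ v, (X - C (μ v))) {v w : V₁} (hv : μ v = 1) (hw : w ≠ v) :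
    μ w = 2 * α - 1 := by
  have huniv : {w, v} = (Finset.univ : Finset V₁) :=
    Finset.eq_univ_of_card _ (by rw [Finset.card_pair hw, hcard])
  have hsum := sum_eq_trace_of_charpoly_eq_prod hch
  rw [trace_Aalpha_of_isRegularOfDegree hreg, hcard, ← huniv, Finset.sum_pair hw, hv] at hsum
  push_cast at hsum
  linarith

variable [Fintype G₁.edgeSet] {μ₁ : V₁ → ℝ} {μ₂ : V₂ → ℝ} {v₁ : V₁} {v₂ : V₂}

theorem smul_sub_mul_edgeIncMatrix_of_isRegularOfDegree (hreg₁ : G₁.IsRegularOfDegree r₁) (α : ℝ)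
    (n₂ : ℕ) :
    (X - C (2 * α)) • ((X - C (α * (r₁ + n₂))) • (1 : Matrix V₁ V₁ ℝ[X])) -
        (-((1 - α) • edgeIncMatrix G₁).map C) * (-((1 - α) • edgeIncMatrix G₁)ᵀ.map C) =
      joinQuadratic α r₁ n₂ 0 • 1 - ((1 - α) • Aalpha G₁ α).map C := by
  rw [Matrix.neg_mul, Matrix.mul_neg, neg_neg, ← Matrix.map_mul,
    smul_edgeIncMatrix_mul_transpose_of_isRegularOfDegree hreg₁, joinQuadratic_zero]
  ext1 v w
  by_cases hvw : v = w <;> simp [hvw, sub_add_eq_sub_sub]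

theorem pow_mul_charpoly_Aalpha_subdivisionVertexJoin
    (hreg₁ : G₁.IsRegularOfDegree r₁) (hreg₂ : G₂.IsRegularOfDegree r₂)
    (hμ₁ch : (Aalpha G₁ α).charpoly = ∏ v, (X - C (μ₁ v))) (hv₁ : μ₁ v₁ = r₁)
    (hμ₂ch : (Aalpha G₂ α).charpoly = ∏ w, (X - C (μ₂ w))) (hv₂ : μ₂ v₂ = r₂) :
    (X - C (2 * α)) ^ Fintype.card V₁ * (Aalpha (subdivisionVertexJoin G₁ G₂) α).charpoly =
      (X - C (2 * α)) ^ Fintype.card G₁.edgeSet *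
        ((∏ w with w ≠ v₂, (X - C (α * Fintype.card V₁ + μ₂ w))) *
        (∏ v with v ≠ v₁, joinQuadratic α r₁ (Fintype.card V₂) (μ₁ v)) *
        joinCubic α (Fintype.card V₁) r₁ (Fintype.card V₂) r₂) := by
  set n₁ := Fintype.card V₁
  set n₂ := Fintype.card V₂
  have hQ := smul_one_sub_map_C_mulVec_one (Aalpha_mulVec_one_of_isRegularOfDegree hreg₂ α)
    (X - C (α * n₁)) 1
  have hS := smul_one_sub_map_C_mulVec_one (Aalpha_mulVec_one_of_isRegularOfDegree hreg₁ α)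
    (joinQuadratic α r₁ n₂ 0) (1 - α)
  have hdetQ := det_smul_one_sub_map_C_of_charpoly_eq_prod hμ₂ch (X - C (α * n₁)) 1
  have hdetS := det_smul_one_sub_map_C_of_charpoly_eq_prod hμ₁ch (joinQuadratic α r₁ n₂ 0) (1 - α)
  simp only [one_smul, one_mul, sub_sub, ← C_add] at hQ hdetQ
  simp only [joinQuadratic_zero_sub_C] at hS hdetS
  rw [← smul_sub_mul_edgeIncMatrix_of_isRegularOfDegree hreg₁] at hS hdetS
  have hdet := mul_det_fromBlocks_constMatrix_of_mulVec_one (X_sub_C_ne_zero _) hQ hS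
    (-C (1 - α)) (-C (1 - α))
  rw [← charmatrix_Aalpha_subdivisionVertexJoin_of_isRegularOfDegree G₂ hreg₁, hdetS, hdetQ,
    ← Finset.mul_prod_erase _ _ (Finset.mem_univ v₁), hv₁,
    ← Finset.mul_prod_erase _ _ (Finset.mem_univ v₂), hv₂] at hdet
  simp only [Finset.filter_ne', joinCubic]
  apply mul_left_cancel₀ (mul_ne_zero (X_sub_C_ne_zero (α * n₁ + r₂))
    (joinQuadratic_ne_zero α r₁ n₂ r₁))
  simp only [charpoly, C_mul, C_pow, C_sub, map_natCast] at hdet ⊢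
  linear_combination hdet

theorem Aalpha_spectrum_subdivisionVertexJoin_regular_general
    (hreg₁ : G₁.IsRegularOfDegree r₁) (hreg₂ : G₂.IsRegularOfDegree r₂)
    (hμ₁ch : (Aalpha G₁ α).charpoly = ∏ v, (X - C (μ₁ v))) (hv₁ : μ₁ v₁ = r₁)
    (hμ₂ch : (Aalpha G₂ α).charpoly = ∏ w, (X - C (μ₂ w))) (hv₂ : μ₂ v₂ = r₂) :
    (r₁ = 1 → G₁.Connected →
      (Aalpha (subdivisionVertexJoin G₁ G₂) α).charpoly =
        (X - C (α * (1 + Fintype.card V₂))) *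
        (∏ w with w ≠ v₂, (X - C (2 * α + μ₂ w))) *
        joinCubic α 2 1 (Fintype.card V₂) r₂) ∧
    (2 ≤ r₁ →
      (Aalpha (subdivisionVertexJoin G₁ G₂) α).charpoly =
        (X - C (2 * α)) ^ (Fintype.card G₁.edgeSet - Fintype.card V₁) *
        (∏ w with w ≠ v₂, (X - C (α * Fintype.card V₁ + μ₂ w))) *
        (∏ v with v ≠ v₁, joinQuadratic α r₁ (Fintype.card V₂) (μ₁ v)) *
        joinCubic α (Fintype.card V₁) r₁ (Fintype.card V₂) r₂) := by
  have hkey := pow_mul_charpoly_Aalpha_subdivisionVertexJoin hreg₁ hreg₂ hμ₁ch hv₁ hμ₂ch hv₂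
  have hedges := two_mul_card_edgeSet_of_isRegularOfDegree hreg₁
  have hpow (k : ℕ) : (X - C (2 * α)) ^ k ≠ 0 := pow_ne_zero k (X_sub_C_ne_zero _)
  refine ⟨fun hr hconn => ?_, fun hr => ?_⟩
  · subst hr
    have hcard := card_eq_two_of_isRegularOfDegree_one hconn hreg₁
    have hedge : Fintype.card G₁.edgeSet = 1 := by lia
    have hquad : ∏ v with v ≠ v₁, joinQuadratic α 1 (Fintype.card V₂) (μ₁ v) =
        (X - C (2 * α)) * (X - C (α * (1 + Fintype.card V₂))) := by
      have hother : (Finset.univ.filter (· ≠ v₁)).card = 1 := by simp [Finset.filter_ne', hcard]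
      obtain ⟨w, hw⟩ := Finset.card_eq_one.1 hother
      have hwv : w ≠ v₁ := by simpa using hw.ge (Finset.mem_singleton_self w)
      rw [hw, Finset.prod_singleton, ← joinQuadratic_one_two_mul_sub_one,
        Aalpha_eigenvalue_eq_of_isRegularOfDegree_one hcard hreg₁ hμ₁ch (by simpa using hv₁) hwv]
    rw [hcard, hedge, hquad] at hkey
    apply mul_left_cancel₀ (hpow 2)
    simp only [Nat.cast_ofNat, mul_comm α 2] at hkey
    linear_combination hkey
  · have hle : Fintype.card V₁ ≤ Fintype.card G₁.edgeSet := by nlinarith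
    obtain ⟨k, hk⟩ := Nat.exists_eq_add_of_le hle
    apply mul_left_cancel₀ (hpow (Fintype.card V₁))
    rw [hkey, hk, Nat.add_sub_cancel_left, pow_add]
    ring

end JoinSpectrum

/-- Corollary: the `A_α`-spectrum (as the factorization of the `A_α`-characteristic
polynomial) of the subdivision-vertex join `G₁ ∨̇ G₂` of an `r₁`-regular graph `G₁`
and an `r₂`-regular graph `G₂`, in the cases `r₁ = 1` and `r₁ ≥ 2`. -/
theorem Aalpha_spectrum_subdivisionVertexJoin_regular
    {n₁ m₁ n₂ r₁ r₂ : ℕ} (G₁ : SimpleGraph (Fin n₁)) (G₂ : SimpleGraph (Fin n₂))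
    (hconn₁ : G₁.Connected) (hconn₂ : G₂.Connected)
    (hreg₁ : G₁.IsRegularOfDegree r₁) (hreg₂ : G₂.IsRegularOfDegree r₂)
    (hm : Fintype.card G₁.edgeSet = m₁)
    (α : ℝ) (hα : α ∈ Set.Icc (0 : ℝ) 1)
    (μ₁ : Fin n₁ → ℝ) (hμ₁ : Antitone μ₁)
    (hμ₁ch : (Aalpha G₁ α).charpoly = ∏ i, (X - C (μ₁ i)))
    (μ₂ : Fin n₂ → ℝ) (hμ₂ : Antitone μ₂)
    (hμ₂ch : (Aalpha G₂ α).charpoly = ∏ i, (X - C (μ₂ i))) :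
    (r₁ = 1 →
      (Aalpha (subdivisionVertexJoin G₁ G₂) α).charpoly =
        (X - C (α * (1 + n₂))) *
        (∏ i ∈ Finset.univ.filter (fun i : Fin n₂ => i.val ≠ 0),
          (X - C (2 * α + μ₂ i))) *
        ((X - C (2 * α + r₂)) *
            (X ^ 2 - C (α * (3 + n₂)) * X - C (2 * (1 - 2 * α - α ^ 2 * n₂)))
          - C (2 * n₂ * (1 - α) ^ 2) * (X - C (2 * α)))) ∧
    (2 ≤ r₁ →
      (Aalpha (subdivisionVertexJoin G₁ G₂) α).charpoly =
        (X - C (2 * α)) ^ (m₁ - n₁) *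
        (∏ i ∈ Finset.univ.filter (fun i : Fin n₂ => i.val ≠ 0),
          (X - C (α * n₁ + μ₂ i))) *
        (∏ i ∈ Finset.univ.filter (fun i : Fin n₁ => i.val ≠ 0),
          (X ^ 2 - C (α * (2 + r₁ + n₂)) * X
            + C (α * (α * r₁ + r₁ + 2 * α * n₂) - (1 - α) * (r₁ * (1 - α) + μ₁ i)))) *
        ((X - C (α * n₁ + r₂)) *
            (X ^ 2 - C (α * (2 + r₁ + n₂)) * X - C (2 * (r₁ - 2 * α * r₁ - α ^ 2 * n₂)))
          - C (n₁ * n₂ * (1 - α) ^ 2) * (X - C (2 * α)))) := by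
  have hn₁ : NeZero n₁ := ⟨by rintro rfl; exact hconn₁.nonempty.elim fun i => i.elim0⟩
  have hn₂ : NeZero n₂ := ⟨by rintro rfl; exact hconn₂.nonempty.elim fun i => i.elim0⟩
  have hμ₁0 := Aalpha_eigenvalue_zero_eq_of_antitone hreg₁ hα.2 hμ₁ hμ₁ch
  have hμ₂0 := Aalpha_eigenvalue_zero_eq_of_antitone hreg₂ hα.2 hμ₂ hμ₂ch
  obtain ⟨hone, htwo⟩ :=
    Aalpha_spectrum_subdivisionVertexJoin_regular_general hreg₁ hreg₂ hμ₁ch hμ₁0 hμ₂ch hμ₂0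
  simp only [Fintype.card_fin] at hone htwo
  simp only [Fin.val_ne_zero_iff]
  refine ⟨fun hr => ?_, fun hr => ?_⟩
  · rw [hone hr hconn₁, joinCubic_two_one]
  · rw [htwo hr, hm, joinCubic, joinQuadratic_natCast]
    rfl
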